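/- Let N ≥ 1, p, q ≥ 0 with pq > 1, and let r₁ = (N/2)(pq−1)/(p+1) and r₂ = (N/2)(pq−1)/(q+1), and assume r₁ > 1 and r₂ > 1 (equivalently N(p/r₂ − 1/r₁) = N(q/r₁ − 1/r₂) = 2). Then there exist constants d* > 0 and C > 0 such that for every d with 0 < d ≤ d* and all nonnegative measurable functions u₀, v₀ on ℝ^N satisfying 0 ≤ u₀(x) ≤ d|x|^{−N/r₁} and 0 ≤ v₀(x) ≤ d|x|^{−N/r₂} for all x ∈ ℝ^N, the system (S) possesses a global-in-time solution (u,v) on ℝ^N × (0,∞) satisfying 0 ≤ u(x,t) ≤ C(|x| + t^{1/2})^{−N/r₁} and 0 ≤ v(x,t) ≤ C(|x| + t^{1/2})^{−N/r₂} for a.e. x ∈ ℝ^N and all t > 0. -/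

import Mathlib

open MeasureTheory ENNReal Filter

noncomputable section

/-- Euclidean space `ℝ^N`. -/
abbrev Euc (N : ℕ) := EuclideanSpace ℝ (Fin N)

/-- The heat semigroup applied to a (nonnegative) function `φ` on `ℝ^N`, with values in `[0,∞]`:
`[S(t)φ](x) = ∫ (4πt)^{-N/2} exp(-|x-y|²/(4t)) φ(y) dy`. -/
noncomputable def heatS (N : ℕ) (t : ℝ) (φ : Euc N → ℝ) (x : Euc N) : ℝ≥0∞ :=
  ∫⁻ y, ENNReal.ofReal
    ((4 * Real.pi * t) ^ (-(N : ℝ) / 2) * Real.exp (-‖x - y‖ ^ 2 / (4 * t)) * φ y)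

/-- The `L^∞` norm of `S(t)φ` on `ℝ^N`. -/
noncomputable def heatSup (N : ℕ) (t : ℝ) (φ : Euc N → ℝ) : ℝ≥0∞ :=
  essSup (heatS N t φ) volume

/-- The `L^{r,∞}(E)` quasinorm: for `1 < r < ∞` it is
`sup_{λ>0} λ |{x ∈ E : |f x| > λ}|^{1/r}`; for `r = 1` (resp. `r = ∞`)
it is the usual `L¹(E)` (resp. `L^∞(E)`) norm. -/
noncomputable def wnorm (N : ℕ) (r : ℝ≥0∞) (f : Euc N → ℝ) (E : Set (Euc N)) : ℝ≥0∞ :=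
  if r = 1 then ∫⁻ x in E, ENNReal.ofReal |f x|
  else if r = ⊤ then essSup (fun x => ENNReal.ofReal |f x|) (volume.restrict E)
  else ⨆ (l : ℝ) (_ : 0 < l), ENNReal.ofReal l * (volume {x ∈ E | l < |f x|}) ^ (1 / r.toReal)

/-- The uniformly local quasinorm `|||f|||_{r,ρ} = sup_x ‖f‖_{L^{r,∞}(B(x,ρ))}`
(for `r = ∞` it is the `L^∞(ℝ^N)` norm). -/
noncomputable def ulocNorm (N : ℕ) (r : ℝ≥0∞) (ρ : ℝ) (f : Euc N → ℝ) : ℝ≥0∞ :=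
  if r = ⊤ then essSup (fun x => ENNReal.ofReal |f x|) volume
  else ⨆ x : Euc N, wnorm N r f (Metric.ball x ρ)

/-- `u ∈ L^∞(τ, T-τ; L^∞(ℝ^N))` for every `τ ∈ (0, T/2)`. -/
def LocBdd (N : ℕ) (T : ℝ≥0∞) (u : Euc N → ℝ → ℝ) : Prop :=
  ∀ τ : ℝ, 0 < τ → ENNReal.ofReal (2 * τ) < T →
    ∃ M : ℝ, ∀ t : ℝ, τ ≤ t → ENNReal.ofReal (t + τ) ≤ T →
      ∀ᵐ x ∂(volume : Measure (Euc N)), |u x t| ≤ M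

/-- Regularity requirements on a pair `(u,v)`: nonnegativity, joint measurability and
uniform boundedness away from `t = 0` and `t = T`. -/
def PairRegular (N : ℕ) (T : ℝ≥0∞) (u v : Euc N → ℝ → ℝ) : Prop :=
  (∀ x t, 0 ≤ u x t) ∧ (∀ x t, 0 ≤ v x t) ∧
  Measurable (Function.uncurry u) ∧ Measurable (Function.uncurry v) ∧
  LocBdd N T u ∧ LocBdd N T v

/-- The Duhamel identities for the system (S) `∂ₜu = Δu + v^p`, `∂ₜv = Δv + u^q` at time `t`. -/
def DuhamelSys (N : ℕ) (p q : ℝ) (u₀ v₀ : Euc N → ℝ) (u v : Euc N → ℝ → ℝ) (t : ℝ) : Prop :=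
  (∀ᵐ x ∂(volume : Measure (Euc N)), ENNReal.ofReal (u x t) =
      heatS N t u₀ x + ∫⁻ s in Set.Ioo 0 t, heatS N (t - s) (fun y => v y s ^ p) x) ∧
  (∀ᵐ x ∂(volume : Measure (Euc N)), ENNReal.ofReal (v x t) =
      heatS N t v₀ x + ∫⁻ s in Set.Ioo 0 t, heatS N (t - s) (fun y => u y s ^ q) x)

/-- The Duhamel inequalities (`≥`, with finite left-hand side) for the system (S) at time `t`. -/
def DuhamelSuperSys (N : ℕ) (p q : ℝ) (u₀ v₀ : Euc N → ℝ) (u v : Euc N → ℝ → ℝ) (t : ℝ) : Prop :=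
  (∀ᵐ x ∂(volume : Measure (Euc N)),
      heatS N t u₀ x + (∫⁻ s in Set.Ioo 0 t, heatS N (t - s) (fun y => v y s ^ p) x) ≤
        ENNReal.ofReal (u x t)) ∧
  (∀ᵐ x ∂(volume : Measure (Euc N)),
      heatS N t v₀ x + (∫⁻ s in Set.Ioo 0 t, heatS N (t - s) (fun y => u y s ^ q) x) ≤
        ENNReal.ofReal (v x t))

/-- `(u,v)` is a solution of the system (S) on `ℝ^N × (0,T)`. -/
def IsSolSys (N : ℕ) (p q : ℝ) (u₀ v₀ : Euc N → ℝ) (T : ℝ≥0∞) (u v : Euc N → ℝ → ℝ) : Prop :=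
  PairRegular N T u v ∧
  ∀ t : ℝ, 0 < t → ENNReal.ofReal t < T → DuhamelSys N p q u₀ v₀ u v t

/-- `(u,v)` is a supersolution of the system (S) on `ℝ^N × (0,T)`. -/
def IsSuperSys (N : ℕ) (p q : ℝ) (u₀ v₀ : Euc N → ℝ) (T : ℝ≥0∞) (u v : Euc N → ℝ → ℝ) : Prop :=
  PairRegular N T u v ∧
  ∀ t : ℝ, 0 < t → ENNReal.ofReal t < T → DuhamelSuperSys N p q u₀ v₀ u v t

/-- `(u,v)` is the minimal solution of the system (S) on `ℝ^N × (0,T)`. -/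
def IsMinSolSys (N : ℕ) (p q : ℝ) (u₀ v₀ : Euc N → ℝ) (T : ℝ≥0∞)
    (u v : Euc N → ℝ → ℝ) : Prop :=
  IsSolSys N p q u₀ v₀ T u v ∧
  ∀ u' v' : Euc N → ℝ → ℝ, IsSolSys N p q u₀ v₀ T u' v' →
    ∀ t : ℝ, 0 < t → ENNReal.ofReal t < T →
      (∀ᵐ x ∂(volume : Measure (Euc N)), u x t ≤ u' x t) ∧
      (∀ᵐ x ∂(volume : Measure (Euc N)), v x t ≤ v' x t)

/-- Regularity requirements on a scalar function `w`. -/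
def ScalarRegular (N : ℕ) (T : ℝ≥0∞) (w : Euc N → ℝ → ℝ) : Prop :=
  (∀ x t, 0 ≤ w x t) ∧ Measurable (Function.uncurry w) ∧ LocBdd N T w

/-- The Duhamel identity for the scalar problem (E) `∂ₜw = Δw + α w^A + β w^B` at time `t`. -/
def DuhamelScalar (N : ℕ) (α β A B : ℝ) (w₀ : Euc N → ℝ) (w : Euc N → ℝ → ℝ) (t : ℝ) : Prop :=
  ∀ᵐ x ∂(volume : Measure (Euc N)), ENNReal.ofReal (w x t) =
    heatS N t w₀ x +
      ∫⁻ s in Set.Ioo 0 t, heatS N (t - s) (fun y => α * w y s ^ A + β * w y s ^ B) x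

/-- The Duhamel inequality (`≥`, with finite left-hand side) for the scalar problem (E). -/
def DuhamelSuperScalar (N : ℕ) (α β A B : ℝ) (w₀ : Euc N → ℝ) (w : Euc N → ℝ → ℝ)
    (t : ℝ) : Prop :=
  ∀ᵐ x ∂(volume : Measure (Euc N)),
    heatS N t w₀ x +
        (∫⁻ s in Set.Ioo 0 t, heatS N (t - s) (fun y => α * w y s ^ A + β * w y s ^ B) x) ≤
      ENNReal.ofReal (w x t)

/-- `w` is a solution of the scalar problem (E) on `ℝ^N × (0,T)`. -/
def IsSolScalar (N : ℕ) (α β A B : ℝ) (w₀ : Euc N → ℝ) (T : ℝ≥0∞)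
    (w : Euc N → ℝ → ℝ) : Prop :=
  ScalarRegular N T w ∧
  ∀ t : ℝ, 0 < t → ENNReal.ofReal t < T → DuhamelScalar N α β A B w₀ w t

/-- `w` is a supersolution of the scalar problem (E) on `ℝ^N × (0,T)`. -/
def IsSuperScalar (N : ℕ) (α β A B : ℝ) (w₀ : Euc N → ℝ) (T : ℝ≥0∞)
    (w : Euc N → ℝ → ℝ) : Prop :=
  ScalarRegular N T w ∧
  ∀ t : ℝ, 0 < t → ENNReal.ofReal t < T → DuhamelSuperScalar N α β A B w₀ w t

/-- The Duhamel identities for the strongly coupled system (SC)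
`∂ₜu = Δu + u^{p₁} v^{p₂}`, `∂ₜv = Δv + u^{q₁} v^{q₂}` at time `t`. -/
def DuhamelSC (N : ℕ) (p₁ p₂ q₁ q₂ : ℝ) (u₀ v₀ : Euc N → ℝ) (u v : Euc N → ℝ → ℝ)
    (t : ℝ) : Prop :=
  (∀ᵐ x ∂(volume : Measure (Euc N)), ENNReal.ofReal (u x t) =
      heatS N t u₀ x +
        ∫⁻ s in Set.Ioo 0 t, heatS N (t - s) (fun y => u y s ^ p₁ * v y s ^ p₂) x) ∧
  (∀ᵐ x ∂(volume : Measure (Euc N)), ENNReal.ofReal (v x t) =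
      heatS N t v₀ x +
        ∫⁻ s in Set.Ioo 0 t, heatS N (t - s) (fun y => u y s ^ q₁ * v y s ^ q₂) x)

/-- `(u,v)` is a solution of the strongly coupled system (SC) on `ℝ^N × (0,T)`. -/
def IsSolSC (N : ℕ) (p₁ p₂ q₁ q₂ : ℝ) (u₀ v₀ : Euc N → ℝ) (T : ℝ≥0∞)
    (u v : Euc N → ℝ → ℝ) : Prop :=
  PairRegular N T u v ∧
  ∀ t : ℝ, 0 < t → ENNReal.ofReal t < T → DuhamelSC N p₁ p₂ q₁ q₂ u₀ v₀ u v t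

/-!
Both data are dominated by the scale-invariant profiles `δ |x|^(-a)`, `δ |x|^(-b)` with
`a = 2 (p + 1) / (p q - 1)` and `b = 2 (q + 1) / (p q - 1)`, so that `p b = a + 2` and
`q a = b + 2`. With `ρ(x, t) = |x| + √t`, the heat semigroup maps `|x|^(-a)` below a multiple of
`ρ^(-a)`, and the Duhamel integral maps a source below `ρ^(-(a + 2))` to one below a multiple of
`ρ^(-a)`. Since `p q > 1`, the constants `M₁`, `M₂` can be taken so small that
`(M₁ ρ^(-a), M₂ ρ^(-b))` is a supersolution; the Picard iterates starting from `0` increase and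
stay below it, and their limit is the solution.
-/

section PowerIntegrals

open scoped Pointwise

lemma setLIntegral_Ioo_ofReal_rpow {ε t : ℝ} (hε : 0 < ε) (ht : 0 < t) :
    ∫⁻ s in Set.Ioo 0 t, ENNReal.ofReal (s ^ (ε - 1)) = ENNReal.ofReal (t ^ ε / ε) := by
  rw [← ofReal_integral_eq_lintegral_ofReal
      ((intervalIntegral.integrableOn_Ioo_rpow_iff ht).2 (by linarith))
      ((ae_restrict_mem measurableSet_Ioo).mono fun s hs => Real.rpow_nonneg hs.1.le _),
    ← integral_Ioc_eq_integral_Ioo, ← intervalIntegral.integral_of_le ht.le,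
    integral_rpow (Or.inl (by linarith)), sub_add_cancel, Real.zero_rpow hε.ne', sub_zero]

variable {E : Type*} [NormedAddCommGroup E] [NormedSpace ℝ E] [FiniteDimensional ℝ E]
  [MeasurableSpace E] [BorelSpace E] (μ : Measure E) [μ.IsAddHaarMeasure]

lemma setIntegral_ball_norm_rpow {R : ℝ} (hR : 0 < R) (s : ℝ) :
    ∫ y in Metric.ball (0 : E) R, ‖y‖ ^ s ∂μ =
      R ^ (Module.finrank ℝ E + s) * ∫ y in Metric.ball (0 : E) 1, ‖y‖ ^ s ∂μ := by
  have hscale := Measure.setIntegral_comp_smul_of_pos μ (fun y : E => ‖y‖ ^ s)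
    (Metric.ball 0 1) hR
  have hball : R • Metric.ball (0 : E) 1 = Metric.ball 0 R := by
    rw [smul_unitBall hR.ne', Real.norm_of_nonneg hR.le]
  simp only [hball, norm_smul, Real.norm_of_nonneg hR.le, Real.mul_rpow hR.le (norm_nonneg _),
    integral_const_mul, smul_eq_mul] at hscale
  rw [Real.rpow_add hR, Real.rpow_natCast, mul_assoc, hscale, mul_inv_cancel_left₀ (by positivity)]

lemma integrableOn_ball_norm_rpow [Nontrivial E] {s : ℝ} (hs : -(Module.finrank ℝ E : ℝ) < s)
    (R : ℝ) : IntegrableOn (fun y : E => ‖y‖ ^ s) (Metric.ball 0 R) μ := by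
  rcases le_or_gt R 0 with hR | hR
  · simp [Metric.ball_eq_empty.2 hR]
  rw [integrableOn_fun_norm_addHaar μ (f := fun r : ℝ => r ^ s)]
  have hint : IntegrableOn (fun r : ℝ => r ^ (Module.finrank ℝ E - 1 + s)) (Set.Ioo 0 R) :=
    (intervalIntegral.integrableOn_Ioo_rpow_iff hR).2 (by linarith)
  refine hint.congr_fun (fun r hr => ?_) measurableSet_Ioo
  simp only [smul_eq_mul]
  rw [Real.rpow_add hr.1, ← Real.rpow_natCast, Nat.cast_pred Module.finrank_pos]

lemma setLIntegral_ball_ofReal_norm_rpow [Nontrivial E] {s : ℝ}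
    (hs : -(Module.finrank ℝ E : ℝ) < s) {R : ℝ} (hR : 0 < R) :
    ∫⁻ y in Metric.ball (0 : E) R, ENNReal.ofReal ‖y‖ ^ s ∂μ =
      ENNReal.ofReal
        (R ^ (Module.finrank ℝ E + s) * ∫ y in Metric.ball (0 : E) 1, ‖y‖ ^ s ∂μ) := by
  rw [← setIntegral_ball_norm_rpow μ hR, ofReal_integral_eq_lintegral_ofReal
    (integrableOn_ball_norm_rpow μ hs R) (ae_of_all _ fun y => by positivity)]
  refine lintegral_congr_ae (ae_restrict_of_ae ?_)
  filter_upwards [Measure.ae_ne μ (0 : E)] with y hy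
  exact ENNReal.ofReal_rpow_of_pos (norm_pos_iff.2 hy)

end PowerIntegrals

section ParabolicNorm

variable {E : Type*} [NormedAddCommGroup E]

/-- The quantity `|x| + √t`, homogeneous of degree one under the parabolic scaling
`(x, t) ↦ (λ x, λ² t)` of the heat equation. -/
def parabolicNorm (x : E) (t : ℝ) : ℝ := ‖x‖ + √t

lemma parabolicNorm_pos (x : E) {t : ℝ} (ht : 0 < t) : 0 < parabolicNorm x t := by
  unfold parabolicNorm; positivity

lemma norm_le_parabolicNorm (x : E) (t : ℝ) : ‖x‖ ≤ parabolicNorm x t :=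
  le_add_of_nonneg_right (Real.sqrt_nonneg t)

lemma sqrt_le_parabolicNorm (x : E) (t : ℝ) : √t ≤ parabolicNorm x t :=
  le_add_of_nonneg_left (norm_nonneg x)

lemma parabolicNorm_sub_norm_le (x y : E) (t : ℝ) :
    parabolicNorm x t - ‖y‖ ≤ parabolicNorm (x - y) t := by
  unfold parabolicNorm; linarith [norm_sub_norm_le x y]

lemma parabolicNorm_add_le (x : E) {s t : ℝ} (hs : 0 ≤ s) (ht : 0 ≤ t) :
    parabolicNorm x (t + s) ≤ parabolicNorm x t + √s := by
  have hsqrt : √(t + s) ≤ √t + √s := by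
    refine Real.sqrt_le_iff.2 ⟨by positivity, ?_⟩
    nlinarith [Real.sq_sqrt hs, Real.sq_sqrt ht, Real.sqrt_nonneg s, Real.sqrt_nonneg t]
  unfold parabolicNorm; linarith

lemma rpow_neg_le_of_half_le {r ρ α : ℝ} (hρ : 0 < ρ) (h : ρ / 2 ≤ r) (hα : 0 ≤ α) :
    r ^ (-α) ≤ 2 ^ α * ρ ^ (-α) := by
  calc r ^ (-α) ≤ (ρ / 2) ^ (-α) :=
        Real.rpow_le_rpow_of_nonpos (by positivity) h (neg_nonpos.2 hα)
    _ = 2 ^ α * ρ ^ (-α) := by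
        rw [Real.div_rpow hρ.le zero_le_two, Real.rpow_neg zero_le_two, div_inv_eq_mul, mul_comm]

lemma sqrt_rpow_two_mul {t : ℝ} (ht : 0 ≤ t) (e : ℝ) : √t ^ (2 * e) = t ^ e := by
  rw [Real.rpow_mul (Real.sqrt_nonneg t), Real.rpow_two, Real.sq_sqrt ht]

lemma ofReal_parabolicNorm_rpow_le {α s : ℝ} (hα : 0 ≤ α) (hs : 0 < s) (y : E) :
    ENNReal.ofReal (parabolicNorm y s ^ (-α)) ≤ ENNReal.ofReal ‖y‖ ^ (-α) := by
  rw [← ENNReal.ofReal_rpow_of_pos (parabolicNorm_pos y hs)]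
  rw [ENNReal.rpow_neg, ENNReal.rpow_neg, ENNReal.inv_le_inv]
  gcongr
  exact norm_le_parabolicNorm y s

lemma parabolicNorm_rpow_le_mul {a ε s : ℝ} (hε : ε ≤ 1) (hs : 0 < s) (y : E) :
    parabolicNorm y s ^ (-(a + 2)) ≤ s ^ (ε - 1) * parabolicNorm y s ^ (-(a + 2 * ε)) := by
  have hρ := parabolicNorm_pos y hs
  rw [← sqrt_rpow_two_mul hs.le, show -(a + 2) = 2 * (ε - 1) + -(a + 2 * ε) by ring,
    Real.rpow_add hρ]
  gcongr ?_ * _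
  exact Real.rpow_le_rpow_of_nonpos (Real.sqrt_pos.2 hs) (sqrt_le_parabolicNorm y s) (by linarith)

end ParabolicNorm

section HeatKernel

variable {E : Type*} [NormedAddCommGroup E] [InnerProductSpace ℝ E]

/-- The heat kernel `(4πt)^(-n/2) exp(-|z|²/(4t))` on an `n`-dimensional Euclidean space, with
values in `[0, ∞]`; it is meaningful for `t > 0`. -/
def heatKernel (t : ℝ) (z : E) : ℝ≥0∞ :=
  ENNReal.ofReal
    ((4 * Real.pi * t) ^ (-(Module.finrank ℝ E : ℝ) / 2) * Real.exp (-‖z‖ ^ 2 / (4 * t)))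

lemma one_add_pow_mul_exp_neg_sq_le (n : ℕ) {w : ℝ} (hw : 0 ≤ w) :
    (1 + w) ^ n * Real.exp (-w ^ 2 / 4) ≤ n.factorial * Real.exp 2 := by
  have hpow : (1 + w) ^ n ≤ n.factorial * Real.exp (1 + w) := by
    rw [← div_le_iff₀' (by positivity)]
    exact Real.pow_div_factorial_le_exp (1 + w) (by positivity) n
  calc (1 + w) ^ n * Real.exp (-w ^ 2 / 4)
      ≤ n.factorial * Real.exp (1 + w) * Real.exp (-w ^ 2 / 4) := by gcongr
    _ = n.factorial * Real.exp (1 + w + -w ^ 2 / 4) := by rw [mul_assoc, ← Real.exp_add]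
    _ ≤ n.factorial * Real.exp 2 := by gcongr; nlinarith [sq_nonneg (w - 2)]

lemma heatKernel_le {t : ℝ} (ht : 0 < t) (z : E) :
    heatKernel t z ≤ ENNReal.ofReal ((Module.finrank ℝ E).factorial * Real.exp 2 *
      parabolicNorm z t ^ (-(Module.finrank ℝ E : ℝ))) := by
  refine ENNReal.ofReal_le_ofReal ?_
  set n := Module.finrank ℝ E
  have hsqrt : 0 < √t := Real.sqrt_pos.2 ht
  have hρ : parabolicNorm z t = √t * (1 + ‖z‖ / √t) := by unfold parabolicNorm; field_simp; ring
  have hexp : -‖z‖ ^ 2 / (4 * t) = -(‖z‖ / √t) ^ 2 / 4 := by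
    rw [div_pow, Real.sq_sqrt ht.le]; field_simp
  have hprefactor : (4 * Real.pi * t) ^ (-(n : ℝ) / 2) ≤ √t ^ (-(n : ℝ)) := by
    rw [← mul_div_cancel₀ (-(n : ℝ)) two_ne_zero, sqrt_rpow_two_mul ht.le,
      mul_div_cancel₀ (-(n : ℝ)) two_ne_zero]
    refine Real.rpow_le_rpow_of_nonpos ht ?_ (by rw [neg_div]; exact neg_nonpos.2 (by positivity))
    nlinarith [Real.pi_gt_three]
  rw [hexp, hρ, Real.mul_rpow hsqrt.le (by positivity),
    Real.rpow_neg (x := 1 + ‖z‖ / √t) (by positivity), Real.rpow_natCast]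
  have hpow := one_add_pow_mul_exp_neg_sq_le n (w := ‖z‖ / √t) (by positivity)
  rw [← le_div_iff₀' (by positivity)] at hpow
  calc _ ≤ √t ^ (-(n : ℝ)) * (n.factorial * Real.exp 2 / (1 + ‖z‖ / √t) ^ n) := by gcongr
    _ = _ := by rw [div_eq_mul_inv]; ring

variable [MeasurableSpace E] [BorelSpace E]

@[fun_prop]
lemma measurable_heatKernel : Measurable fun w : ℝ × E => heatKernel w.1 w.2 := by
  unfold heatKernel; fun_prop

variable [FiniteDimensional ℝ E]

lemma lintegral_heatKernel {t : ℝ} (ht : 0 < t) : ∫⁻ z : E, heatKernel t z = 1 := by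
  have hgauss := GaussianFourier.integral_rexp_neg_mul_sq_norm (V := E)
    (b := 1 / (4 * t)) (by positivity)
  have hint : Integrable fun z : E => Real.exp (-(1 / (4 * t)) * ‖z‖ ^ 2) := by
    refine not_imp_comm.1 integral_undef ?_
    rw [hgauss]; positivity
  have hexp (z : E) : -‖z‖ ^ 2 / (4 * t) = -(1 / (4 * t)) * ‖z‖ ^ 2 := by ring
  have hbase : Real.pi / (1 / (4 * t)) = 4 * Real.pi * t := by field_simp
  simp only [heatKernel, hexp]
  rw [← ofReal_integral_eq_lintegral_ofReal (hint.const_mul _)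
    (ae_of_all _ fun z => by positivity), integral_const_mul, hgauss, hbase, neg_div,
    Real.rpow_neg (by positivity), inv_mul_cancel₀ (by positivity), ENNReal.ofReal_one]

end HeatKernel

section HeatFlow

variable {E : Type*} [NormedAddCommGroup E] [InnerProductSpace ℝ E] [FiniteDimensional ℝ E]
  [MeasurableSpace E] [BorelSpace E]

/-- The heat semigroup acting on `[0, ∞]`-valued functions; on real-valued data it is `heatS`. -/
def heatFlow (t : ℝ) (φ : E → ℝ≥0∞) (x : E) : ℝ≥0∞ := ∫⁻ y, heatKernel t (x - y) * φ y

lemma heatFlow_mono (t : ℝ) {φ ψ : E → ℝ≥0∞} (h : ∀ y, φ y ≤ ψ y) (x : E) :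
    heatFlow t φ x ≤ heatFlow t ψ x :=
  lintegral_mono fun y => mul_le_mul_right (h y) _

lemma heatFlow_const_mul (t : ℝ) {c : ℝ≥0∞} (hc : c ≠ ⊤) (φ : E → ℝ≥0∞) (x : E) :
    heatFlow t (fun y => c * φ y) x = c * heatFlow t φ x := by
  simp only [heatFlow, mul_left_comm _ c, lintegral_const_mul' c _ hc]

lemma heatFlow_const {t : ℝ} (ht : 0 < t) (c : ℝ≥0∞) (x : E) :
    heatFlow t (fun _ => c) x = c := by
  have hmass : ∫⁻ y, heatKernel t (x - y) = 1 :=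
    (lintegral_sub_left_eq_self (heatKernel t) x).trans (lintegral_heatKernel ht)
  rw [heatFlow, lintegral_mul_const _ (by fun_prop), hmass, one_mul]

lemma measurable_heatFlow {γ : Type*} [MeasurableSpace γ] {t : γ → ℝ} {φ : γ → E → ℝ≥0∞}
    {x : γ → E} (ht : Measurable t) (hφ : Measurable (Function.uncurry φ)) (hx : Measurable x) :
    Measurable fun c => heatFlow (t c) (φ c) (x c) := by
  refine Measurable.lintegral_prod_right' (f := fun w : γ × E =>
    heatKernel (t w.1) (x w.1 - w.2) * Function.uncurry φ w) ?_
  fun_prop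

lemma heatFlow_iSup (t : ℝ) {φ : ℕ → E → ℝ≥0∞} (hφ : ∀ n, Measurable (φ n)) (hmono : Monotone φ)
    (x : E) : heatFlow t (fun y => ⨆ n, φ n y) x = ⨆ n, heatFlow t (φ n) x := by
  simp only [heatFlow, ENNReal.mul_iSup]
  refine lintegral_iSup (fun n => by fun_prop) fun m n hmn y => ?_
  exact mul_le_mul_right (hmono hmn y) _

end HeatFlow

section HeatFlowDecay

variable {E : Type*} [NormedAddCommGroup E] [InnerProductSpace ℝ E] [FiniteDimensional ℝ E]
  [MeasurableSpace E] [BorelSpace E]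

lemma setLIntegral_ball_heatKernel_mul_norm_rpow_le [Nontrivial E] {α : ℝ}
    (hα : α < Module.finrank ℝ E) {t R : ℝ} (ht : 0 < t) (hR : 0 < R) {x : E}
    (hRx : 2 * R ≤ parabolicNorm x t) :
    ∫⁻ y in Metric.ball (0 : E) R, heatKernel t (x - y) * ENNReal.ofReal ‖y‖ ^ (-α) ≤
      ENNReal.ofReal ((Module.finrank ℝ E).factorial * Real.exp 2 *
        (∫ y in Metric.ball (0 : E) 1, ‖y‖ ^ (-α)) * R ^ (-α)) := by
  set n := Module.finrank ℝ E
  have hkernel : ∀ y ∈ Metric.ball (0 : E) R,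
      heatKernel t (x - y) ≤ ENNReal.ofReal (n.factorial * Real.exp 2 * R ^ (-(n : ℝ))) := by
    intro y hy
    have hρ : R ≤ parabolicNorm (x - y) t := by
      linarith [parabolicNorm_sub_norm_le x y t, mem_ball_zero_iff.1 hy]
    refine (heatKernel_le ht _).trans (ENNReal.ofReal_le_ofReal ?_)
    gcongr ?_ * ?_
    exact Real.rpow_le_rpow_of_nonpos hR hρ (neg_nonpos.2 n.cast_nonneg)
  calc ∫⁻ y in Metric.ball (0 : E) R, heatKernel t (x - y) * ENNReal.ofReal ‖y‖ ^ (-α)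
      ≤ ∫⁻ y in Metric.ball (0 : E) R, ENNReal.ofReal (n.factorial * Real.exp 2 *
          R ^ (-(n : ℝ))) * ENNReal.ofReal ‖y‖ ^ (-α) :=
        setLIntegral_mono' measurableSet_ball fun y hy => mul_le_mul_left (hkernel y hy) _
    _ = _ := by
        rw [lintegral_const_mul' _ _ ENNReal.ofReal_ne_top,
          setLIntegral_ball_ofReal_norm_rpow volume (neg_lt_neg hα) hR,
          ← ENNReal.ofReal_mul (by positivity), Real.rpow_add hR, Real.rpow_neg hR.le n]
        congr 1
        field_simp
        rfl

lemma setLIntegral_compl_ball_heatKernel_mul_norm_rpow_le {α : ℝ} (hα : 0 ≤ α) {t R : ℝ}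
    (ht : 0 < t) (hR : 0 < R) (x : E) :
    ∫⁻ y in (Metric.ball (0 : E) R)ᶜ, heatKernel t (x - y) * ENNReal.ofReal ‖y‖ ^ (-α) ≤
      ENNReal.ofReal (R ^ (-α)) := by
  have hpow : ∀ y ∈ (Metric.ball (0 : E) R)ᶜ,
      ENNReal.ofReal ‖y‖ ^ (-α) ≤ ENNReal.ofReal (R ^ (-α)) := by
    intro y hy
    have hRy : R ≤ ‖y‖ := by simpa using hy
    rw [ENNReal.ofReal_rpow_of_pos (hR.trans_le hRy)]
    exact ENNReal.ofReal_le_ofReal (Real.rpow_le_rpow_of_nonpos hR hRy (neg_nonpos.2 hα))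
  calc ∫⁻ y in (Metric.ball (0 : E) R)ᶜ, heatKernel t (x - y) * ENNReal.ofReal ‖y‖ ^ (-α)
      ≤ ∫⁻ y in (Metric.ball (0 : E) R)ᶜ, heatKernel t (x - y) * ENNReal.ofReal (R ^ (-α)) :=
        setLIntegral_mono' measurableSet_ball.compl fun y hy => mul_le_mul_right (hpow y hy) _
    _ ≤ heatFlow t (fun _ => ENNReal.ofReal (R ^ (-α))) x := setLIntegral_le_lintegral _ _
    _ = ENNReal.ofReal (R ^ (-α)) := heatFlow_const ht _ x

variable (E) in
theorem exists_heatFlow_norm_rpow_le {α : ℝ} (hα₀ : 0 ≤ α) (hα : α < Module.finrank ℝ E) :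
    ∃ A : ℝ, 0 < A ∧ ∀ t : ℝ, 0 < t → ∀ x : E,
      heatFlow t (fun y => ENNReal.ofReal ‖y‖ ^ (-α)) x ≤
        ENNReal.ofReal (A * parabolicNorm x t ^ (-α)) := by
  have : Nontrivial E :=
    Module.nontrivial_of_finrank_pos (R := ℝ) (by exact_mod_cast hα₀.trans_lt hα)
  set c : ℝ := (Module.finrank ℝ E).factorial * Real.exp 2 *
    ∫ y in Metric.ball (0 : E) 1, ‖y‖ ^ (-α)
  have : 0 ≤ c := mul_nonneg (by positivity) (integral_nonneg fun y => by positivity)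
  refine ⟨(c + 1) * 2 ^ α, by positivity, fun t ht x => ?_⟩
  have hρ := parabolicNorm_pos x ht
  set R := parabolicNorm x t / 2 with hR
  have hR₀ : 0 < R := by positivity
  calc heatFlow t (fun y => ENNReal.ofReal ‖y‖ ^ (-α)) x
      ≤ ENNReal.ofReal (c * R ^ (-α)) + ENNReal.ofReal (R ^ (-α)) := by
        rw [heatFlow, ← lintegral_add_compl _ (measurableSet_ball (x := (0 : E)) (ε := R))]
        exact add_le_add
          (setLIntegral_ball_heatKernel_mul_norm_rpow_le hα ht hR₀ (by linarith))
          (setLIntegral_compl_ball_heatKernel_mul_norm_rpow_le hα₀ ht hR₀ x)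
    _ = ENNReal.ofReal ((c + 1) * R ^ (-α)) := by
        rw [← ENNReal.ofReal_add (by positivity) (by positivity)]; ring_nf
    _ ≤ ENNReal.ofReal ((c + 1) * 2 ^ α * parabolicNorm x t ^ (-α)) := by
        rw [mul_assoc]
        gcongr
        exact rpow_neg_le_of_half_le hρ le_rfl hα₀

variable (E) in
theorem exists_heatFlow_parabolicNorm_rpow_le {α : ℝ} (hα₀ : 0 ≤ α)
    (hα : α < Module.finrank ℝ E) :
    ∃ A : ℝ, 0 < A ∧ ∀ s t : ℝ, 0 < s → 0 < t → ∀ x : E,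
      heatFlow t (fun y => ENNReal.ofReal (parabolicNorm y s ^ (-α))) x ≤
        ENNReal.ofReal (A * parabolicNorm x (t + s) ^ (-α)) := by
  obtain ⟨A, hA, hflow⟩ := exists_heatFlow_norm_rpow_le E hα₀ hα
  refine ⟨(A + 1) * 2 ^ α, by positivity, fun s t hs ht x => ?_⟩
  have hρ := parabolicNorm_pos x (add_pos ht hs)
  suffices ∃ r, parabolicNorm x (t + s) / 2 ≤ r ∧
      heatFlow t (fun y => ENNReal.ofReal (parabolicNorm y s ^ (-α))) x ≤
        ENNReal.ofReal ((A + 1) * r ^ (-α)) by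
    obtain ⟨r, hr, hle⟩ := this
    refine hle.trans (ENNReal.ofReal_le_ofReal ?_)
    rw [mul_assoc]
    gcongr
    exact rpow_neg_le_of_half_le hρ hr hα₀
  -- `ρ(y, s)` dominates both `|y|` and `√s`; one of the two resulting bounds is strong enough.
  rcases le_total √s (parabolicNorm x t) with h | h
  · refine ⟨parabolicNorm x t, by linarith [parabolicNorm_add_le x hs.le ht.le], ?_⟩
    have hρt := parabolicNorm_pos x ht
    calc _ ≤ heatFlow t (fun y => ENNReal.ofReal ‖y‖ ^ (-α)) x :=
          heatFlow_mono t (ofReal_parabolicNorm_rpow_le hα₀ hs) x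
      _ ≤ ENNReal.ofReal (A * parabolicNorm x t ^ (-α)) := hflow t ht x
      _ ≤ _ := by gcongr; linarith
  · refine ⟨√s, by linarith [parabolicNorm_add_le x hs.le ht.le], ?_⟩
    calc _ ≤ heatFlow t (fun _ : E => ENNReal.ofReal (√s ^ (-α))) x :=
          heatFlow_mono t (fun y => ENNReal.ofReal_le_ofReal (Real.rpow_le_rpow_of_nonpos
            (Real.sqrt_pos.2 hs) (sqrt_le_parabolicNorm y s) (neg_nonpos.2 hα₀))) x
      _ = ENNReal.ofReal (√s ^ (-α)) := heatFlow_const ht _ x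
      _ ≤ _ := by gcongr; exact le_mul_of_one_le_left (by positivity) (by linarith)

variable (E) in
theorem exists_lintegral_heatFlow_parabolicNorm_rpow_le {a : ℝ} (ha₀ : 0 ≤ a)
    (ha : a < Module.finrank ℝ E) :
    ∃ B : ℝ, 0 < B ∧ ∀ t : ℝ, 0 < t → ∀ x : E,
      ∫⁻ s in Set.Ioo 0 t,
          heatFlow (t - s) (fun y => ENNReal.ofReal (parabolicNorm y s ^ (-(a + 2)))) x ≤
        ENNReal.ofReal (B * parabolicNorm x t ^ (-a)) := by
  -- Trading `ρ(y, s)^(-2 (1 - ε))` for `s^(ε - 1)` lowers the spatial exponent below the dimension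
  -- and keeps the time singularity integrable.
  obtain ⟨ε, hε₀, hε₁, hεa⟩ : ∃ ε : ℝ, 0 < ε ∧ ε ≤ 1 ∧ a + 2 * ε < Module.finrank ℝ E := by
    refine ⟨min 1 ((Module.finrank ℝ E - a) / 4), lt_min one_pos (by linarith),
      min_le_left _ _, ?_⟩
    linarith [min_le_right 1 ((Module.finrank ℝ E - a) / 4)]
  obtain ⟨A, hA, hflow⟩ := exists_heatFlow_parabolicNorm_rpow_le E (by positivity) hεa
  refine ⟨A / ε, by positivity, fun t ht x => ?_⟩
  have hρ := parabolicNorm_pos x ht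
  have hslice : ∀ s ∈ Set.Ioo 0 t,
      heatFlow (t - s) (fun y => ENNReal.ofReal (parabolicNorm y s ^ (-(a + 2)))) x ≤
        ENNReal.ofReal (s ^ (ε - 1)) *
          ENNReal.ofReal (A * parabolicNorm x t ^ (-(a + 2 * ε))) := by
    intro s ⟨hs₀, hst⟩
    calc _ ≤ heatFlow (t - s) (fun y => ENNReal.ofReal (s ^ (ε - 1)) *
            ENNReal.ofReal (parabolicNorm y s ^ (-(a + 2 * ε)))) x := by
          refine heatFlow_mono _ (fun y => ?_) x
          rw [← ENNReal.ofReal_mul (by positivity)]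
          exact ENNReal.ofReal_le_ofReal (parabolicNorm_rpow_le_mul hε₁ hs₀ y)
      _ ≤ _ := by
          rw [heatFlow_const_mul _ ENNReal.ofReal_ne_top]
          gcongr
          simpa using hflow s (t - s) hs₀ (sub_pos.2 hst) x
  have htime : t ^ ε * parabolicNorm x t ^ (-(a + 2 * ε)) ≤ parabolicNorm x t ^ (-a) := by
    rw [← sqrt_rpow_two_mul ht.le, show -a = 2 * ε + -(a + 2 * ε) by ring, Real.rpow_add hρ]
    gcongr
    exact sqrt_le_parabolicNorm x t
  refine (setLIntegral_mono' measurableSet_Ioo hslice).trans ?_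
  rw [lintegral_mul_const' _ _ ENNReal.ofReal_ne_top, setLIntegral_Ioo_ofReal_rpow hε₀ ht,
    ← ENNReal.ofReal_mul (by positivity)]
  refine ENNReal.ofReal_le_ofReal ?_
  calc t ^ ε / ε * (A * parabolicNorm x t ^ (-(a + 2 * ε)))
      = A / ε * (t ^ ε * parabolicNorm x t ^ (-(a + 2 * ε))) := by ring
    _ ≤ A / ε * parabolicNorm x t ^ (-a) := by gcongr

end HeatFlowDecay

section Duhamel

variable {E : Type*} [NormedAddCommGroup E] [InnerProductSpace ℝ E] [FiniteDimensional ℝ E]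
  [MeasurableSpace E] [BorelSpace E]

/-- The Duhamel operator: the value at `z = (x, t)` of the mild solution of `∂ₜw = Δw + G` with
initial datum `φ`. -/
def duhamel (φ : E → ℝ≥0∞) (G : E × ℝ → ℝ≥0∞) (z : E × ℝ) : ℝ≥0∞ :=
  heatFlow z.2 φ z.1 + ∫⁻ s in Set.Ioo 0 z.2, heatFlow (z.2 - s) (fun y => G (y, s)) z.1

lemma duhamel_mono (φ : E → ℝ≥0∞) {G G' : E × ℝ → ℝ≥0∞} (h : ∀ z : E × ℝ, 0 < z.2 → G z ≤ G' z)
    (z : E × ℝ) : duhamel φ G z ≤ duhamel φ G' z :=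
  add_le_add_right (setLIntegral_mono' measurableSet_Ioo fun s hs =>
    heatFlow_mono _ (fun y => h (y, s) hs.1) _) _

lemma measurable_duhamel {φ : E → ℝ≥0∞} {G : E × ℝ → ℝ≥0∞} (hφ : Measurable φ)
    (hG : Measurable G) : Measurable (duhamel φ G) := by
  have hflow : Measurable fun w : (E × ℝ) × ℝ =>
      heatFlow (w.1.2 - w.2) (fun y => G (y, w.2)) w.1.1 :=
    measurable_heatFlow (by fun_prop) (by unfold Function.uncurry; fun_prop) (by fun_prop)
  have hpast : MeasurableSet {w : (E × ℝ) × ℝ | 0 < w.2 ∧ w.2 < w.1.2} :=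
    (measurableSet_lt measurable_const measurable_snd).inter
      (measurableSet_lt measurable_snd (by fun_prop))
  refine Measurable.add
    (measurable_heatFlow measurable_snd (hφ.comp measurable_snd) measurable_fst) ?_
  convert (hflow.indicator hpast).lintegral_prod_right' (ν := volume) using 2 with z
  rw [← lintegral_indicator measurableSet_Ioo]
  rfl

lemma duhamel_iSup (φ : E → ℝ≥0∞) {G : ℕ → E × ℝ → ℝ≥0∞} (hG : ∀ n, Measurable (G n))
    (hmono : Monotone G) (z : E × ℝ) :
    duhamel φ (fun w => ⨆ n, G n w) z = ⨆ n, duhamel φ (G n) z := by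
  have hslice (s : ℝ) : heatFlow (z.2 - s) (fun y => ⨆ n, G n (y, s)) z.1 =
      ⨆ n, heatFlow (z.2 - s) (fun y => G n (y, s)) z.1 :=
    heatFlow_iSup _ (fun n => by fun_prop) (fun m n hmn y => hmono hmn (y, s)) _
  simp only [duhamel, hslice, ← ENNReal.add_iSup]
  rw [lintegral_iSup]
  · exact fun n => measurable_heatFlow (by fun_prop) (by unfold Function.uncurry; fun_prop)
      measurable_const
  · exact fun m n hmn s => heatFlow_mono _ (fun y => hmono hmn (y, s)) _

variable (E) in
theorem exists_duhamel_le {a : ℝ} (ha₀ : 0 ≤ a) (ha : a < Module.finrank ℝ E) :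
    ∃ K : ℝ, 0 < K ∧ ∀ d M : ℝ, 0 ≤ d → 0 ≤ M → ∀ (φ : E → ℝ≥0∞) (G : E × ℝ → ℝ≥0∞),
      (∀ x, φ x ≤ ENNReal.ofReal d * ENNReal.ofReal ‖x‖ ^ (-a)) →
      (∀ z : E × ℝ, 0 < z.2 → G z ≤ ENNReal.ofReal (M * parabolicNorm z.1 z.2 ^ (-(a + 2)))) →
      ∀ z : E × ℝ, 0 < z.2 →
        duhamel φ G z ≤ ENNReal.ofReal (K * (d + M) * parabolicNorm z.1 z.2 ^ (-a)) := by
  obtain ⟨A, hA, hdatum⟩ := exists_heatFlow_norm_rpow_le E ha₀ ha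
  obtain ⟨B, hB, hsource⟩ := exists_lintegral_heatFlow_parabolicNorm_rpow_le E ha₀ ha
  refine ⟨A + B, by positivity, fun d M hd hM φ G hφ hG z hz => ?_⟩
  have hρ := parabolicNorm_pos z.1 hz
  have hlinear : heatFlow z.2 φ z.1 ≤ ENNReal.ofReal (d * (A * parabolicNorm z.1 z.2 ^ (-a))) := by
    refine (heatFlow_mono _ hφ _).trans ?_
    rw [heatFlow_const_mul _ ENNReal.ofReal_ne_top, ENNReal.ofReal_mul hd]
    gcongr
    exact hdatum _ hz _
  have hintegral : ∫⁻ s in Set.Ioo 0 z.2, heatFlow (z.2 - s) (fun y => G (y, s)) z.1 ≤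
      ENNReal.ofReal (M * (B * parabolicNorm z.1 z.2 ^ (-a))) := by
    refine (setLIntegral_mono' measurableSet_Ioo fun s hs =>
      heatFlow_mono _ (fun y => hG (y, s) hs.1) _).trans ?_
    simp only [ENNReal.ofReal_mul hM, heatFlow_const_mul _ ENNReal.ofReal_ne_top,
      lintegral_const_mul' _ _ ENNReal.ofReal_ne_top]
    gcongr
    exact hsource _ hz _
  refine (add_le_add hlinear hintegral).trans ?_
  rw [← ENNReal.ofReal_add (by positivity) (by positivity), ← mul_assoc, ← mul_assoc, ← add_mul]
  gcongr
  nlinarith [mul_nonneg hA.le hM, mul_nonneg hB.le hd]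

end Duhamel

section MildSolution

variable {E : Type*} [NormedAddCommGroup E] [InnerProductSpace ℝ E] [FiniteDimensional ℝ E]
  [MeasurableSpace E] [BorelSpace E] {p q : ℝ} {u₀ v₀ : E → ℝ≥0∞} {U V : E × ℝ → ℝ≥0∞}

/-- Measurable solutions of the Duhamel equations of the system `∂ₜu = Δu + v^p`,
`∂ₜv = Δv + u^q`, with values in `[0, ∞]`: infinite values are not excluded. -/
structure IsMildSol (p q : ℝ) (u₀ v₀ : E → ℝ≥0∞) (U V : E × ℝ → ℝ≥0∞) : Prop where
  measurable_fst : Measurable U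
  measurable_snd : Measurable V
  eq_fst : U = duhamel u₀ fun z => V z ^ p
  eq_snd : V = duhamel v₀ fun z => U z ^ q

/-- The map on pairs whose fixed points are the solutions of the Duhamel equations. -/
def picardMap (p q : ℝ) (u₀ v₀ : E → ℝ≥0∞) (W : (E × ℝ → ℝ≥0∞) × (E × ℝ → ℝ≥0∞)) :
    (E × ℝ → ℝ≥0∞) × (E × ℝ → ℝ≥0∞) :=
  (duhamel u₀ fun z => W.2 z ^ p, duhamel v₀ fun z => W.1 z ^ q)

/-- The Picard iterates, started from the zero pair so that they increase. -/
def picardIterate (p q : ℝ) (u₀ v₀ : E → ℝ≥0∞) (n : ℕ) :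
    (E × ℝ → ℝ≥0∞) × (E × ℝ → ℝ≥0∞) :=
  (picardMap p q u₀ v₀)^[n] ⊥

lemma picardIterate_succ (p q : ℝ) (u₀ v₀ : E → ℝ≥0∞) (n : ℕ) :
    picardIterate p q u₀ v₀ (n + 1) = picardMap p q u₀ v₀ (picardIterate p q u₀ v₀ n) :=
  Function.iterate_succ_apply' _ _ _

lemma monotone_picardIterate (hp : 0 ≤ p) (hq : 0 ≤ q) (u₀ v₀ : E → ℝ≥0∞) :
    Monotone (picardIterate p q u₀ v₀) := by
  have hmap : Monotone (picardMap p q u₀ v₀) := fun W W' h =>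
    ⟨duhamel_mono u₀ fun z _ => ENNReal.rpow_le_rpow (h.2 z) hp,
      duhamel_mono v₀ fun z _ => ENNReal.rpow_le_rpow (h.1 z) hq⟩
  exact hmap.monotone_iterate_of_le_map bot_le

lemma measurable_picardIterate (hu₀ : Measurable u₀) (hv₀ : Measurable v₀) (n : ℕ) :
    Measurable (picardIterate p q u₀ v₀ n).1 ∧ Measurable (picardIterate p q u₀ v₀ n).2 := by
  induction n with
  | zero => exact ⟨measurable_const, measurable_const⟩
  | succ n ih =>
    rw [picardIterate_succ]
    exact ⟨measurable_duhamel hu₀ (ih.2.pow_const p), measurable_duhamel hv₀ (ih.1.pow_const q)⟩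

lemma picardIterate_le (hp : 0 ≤ p) (hq : 0 ≤ q)
    (hU : ∀ z : E × ℝ, 0 < z.2 → duhamel u₀ (fun w => V w ^ p) z ≤ U z)
    (hV : ∀ z : E × ℝ, 0 < z.2 → duhamel v₀ (fun w => U w ^ q) z ≤ V z)
    (n : ℕ) (z : E × ℝ) (hz : 0 < z.2) :
    (picardIterate p q u₀ v₀ n).1 z ≤ U z ∧ (picardIterate p q u₀ v₀ n).2 z ≤ V z := by
  induction n generalizing z with
  | zero => exact ⟨bot_le, bot_le⟩
  | succ n ih =>
    rw [picardIterate_succ]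
    exact ⟨(duhamel_mono u₀ (fun w hw => ENNReal.rpow_le_rpow (ih w hw).2 hp) z).trans (hU z hz),
      (duhamel_mono v₀ (fun w hw => ENNReal.rpow_le_rpow (ih w hw).1 hq) z).trans (hV z hz)⟩

lemma duhamel_iSup_rpow (hp : 0 < p) (φ : E → ℝ≥0∞) {W : ℕ → E × ℝ → ℝ≥0∞}
    (hW : ∀ n, Measurable (W n)) (hmono : Monotone W) (z : E × ℝ) :
    duhamel φ (fun w => (⨆ n, W n w) ^ p) z = ⨆ n, duhamel φ (fun w => W n w ^ p) z := by
  have hpow (w : E × ℝ) : (⨆ n, W n w) ^ p = ⨆ n, W n w ^ p :=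
    (ENNReal.orderIsoRpow p hp).map_iSup fun n => W n w
  simp only [hpow]
  exact duhamel_iSup φ (fun n => (hW n).pow_const p)
    (fun m n hmn w => ENNReal.rpow_le_rpow (hmono hmn w) hp.le) z

lemma isMildSol_iSup_picardIterate (hp : 0 < p) (hq : 0 < q) (hu₀ : Measurable u₀)
    (hv₀ : Measurable v₀) :
    IsMildSol p q u₀ v₀ (fun z => ⨆ n, (picardIterate p q u₀ v₀ n).1 z)
      (fun z => ⨆ n, (picardIterate p q u₀ v₀ n).2 z) := by
  have hmeas := measurable_picardIterate (p := p) (q := q) hu₀ hv₀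
  have hmono := monotone_picardIterate hp.le hq.le u₀ v₀
  have hfst : Monotone fun n => (picardIterate p q u₀ v₀ n).1 := monotone_fst.comp hmono
  have hsnd : Monotone fun n => (picardIterate p q u₀ v₀ n).2 := monotone_snd.comp hmono
  refine ⟨.iSup fun n => (hmeas n).1, .iSup fun n => (hmeas n).2, funext fun z => ?_,
    funext fun z => ?_⟩
  · rw [duhamel_iSup_rpow hp u₀ (fun n => (hmeas n).2) hsnd,
      ← Monotone.iSup_nat_add (fun m n hmn => hfst hmn z) 1]
    simp only [picardIterate_succ, picardMap]
  · rw [duhamel_iSup_rpow hq v₀ (fun n => (hmeas n).1) hfst,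
      ← Monotone.iSup_nat_add (fun m n hmn => hsnd hmn z) 1]
    simp only [picardIterate_succ, picardMap]

theorem exists_isMildSol_le_of_supersolution (hp : 0 < p) (hq : 0 < q) (hu₀ : Measurable u₀)
    (hv₀ : Measurable v₀)
    (hU : ∀ z : E × ℝ, 0 < z.2 → duhamel u₀ (fun w => V w ^ p) z ≤ U z)
    (hV : ∀ z : E × ℝ, 0 < z.2 → duhamel v₀ (fun w => U w ^ q) z ≤ V z) :
    ∃ U' V' : E × ℝ → ℝ≥0∞, IsMildSol p q u₀ v₀ U' V' ∧
      ∀ z : E × ℝ, 0 < z.2 → U' z ≤ U z ∧ V' z ≤ V z :=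
  ⟨_, _, isMildSol_iSup_picardIterate hp hq hu₀ hv₀, fun z hz =>
    ⟨iSup_le fun n => (picardIterate_le hp.le hq.le hU hV n z hz).1,
      iSup_le fun n => (picardIterate_le hp.le hq.le hU hV n z hz).2⟩⟩

end MildSolution

section ScalingExponent

/-- The exponent `a = 2 (p + 1) / (p q - 1)` for which the system is invariant under
`u ↦ λ^a u(λ x, λ² t)`; the exponent for `v` is `scalingExponent q p`. -/
def scalingExponent (p q : ℝ) : ℝ := 2 * (p + 1) / (p * q - 1)

variable {p q : ℝ}

lemma scalingExponent_nonneg (hp : 0 ≤ p) (hpq : 1 < p * q) : 0 ≤ scalingExponent p q :=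
  div_nonneg (by positivity) (sub_nonneg.2 hpq.le)

lemma mul_scalingExponent (hpq : p * q ≠ 1) :
    p * scalingExponent q p = scalingExponent p q + 2 := by
  have : p * q - 1 ≠ 0 := sub_ne_zero.2 hpq
  rw [scalingExponent, scalingExponent, mul_comm q p]
  field_simp
  ring

lemma neg_div_eq_neg_scalingExponent {n : ℝ} (hn : n ≠ 0) (p q : ℝ) :
    -n / (n / 2 * ((p * q - 1) / (p + 1))) = -scalingExponent p q := by
  rw [scalingExponent]
  field_simp

lemma exists_supersolution_constants (hpq : 1 < p * q) {K : ℝ} (hK : 0 < K) :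
    ∃ δ M₁ M₂ : ℝ, 0 < δ ∧ 0 < M₁ ∧ 0 < M₂ ∧ K * (δ + M₂ ^ p) ≤ M₁ ∧ K * (δ + M₁ ^ q) ≤ M₂ := by
  -- With `M₂ = 2 K M₁^q`, the first condition becomes `L M₁^(p q - 1) ≤ 1` up to the term in `δ`.
  set L : ℝ := 2 * K * (2 * K) ^ p
  set M₁ : ℝ := L⁻¹ ^ (p * q - 1)⁻¹
  set M₂ : ℝ := 2 * K * M₁ ^ q
  have hL : 0 < L := by positivity
  have hM₁ : 0 < M₁ := by positivity
  have hM₂ : 0 < M₂ := by positivity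
  have hfst : 2 * K * M₂ ^ p = M₁ := by
    have hpow : M₁ ^ (p * q - 1) = L⁻¹ := Real.rpow_inv_rpow (by positivity) (by linarith)
    calc 2 * K * M₂ ^ p = L * (M₁ ^ (p * q - 1) * M₁) := by
          rw [Real.mul_rpow (by positivity) (by positivity), ← Real.rpow_mul hM₁.le,
            ← Real.rpow_add_one hM₁.ne', sub_add_cancel, mul_comm q p, ← mul_assoc]
      _ = M₁ := by rw [hpow, mul_inv_cancel_left₀ hL.ne']
  refine ⟨min M₁ M₂ / (2 * K), M₁, M₂, by positivity, hM₁, hM₂, ?_, ?_⟩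
  · have : K * (min M₁ M₂ / (2 * K)) ≤ M₁ / 2 := by
      field_simp; exact min_le_left _ _
    linarith
  · have : K * (min M₁ M₂ / (2 * K)) ≤ M₂ / 2 := by
      field_simp; exact min_le_right _ _
    linarith

lemma ofReal_mul_rpow_neg_rpow {M ρ a b : ℝ} (hp : 0 ≤ p) (hM : 0 ≤ M) (hρ : 0 < ρ)
    (hab : p * b = a + 2) :
    ENNReal.ofReal (M * ρ ^ (-b)) ^ p = ENNReal.ofReal (M ^ p * ρ ^ (-(a + 2))) := by
  rw [ENNReal.ofReal_rpow_of_nonneg (by positivity) hp, Real.mul_rpow hM (by positivity),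
    ← Real.rpow_mul hρ.le, ← hab, neg_mul, mul_comm b]

end ScalingExponent

theorem exists_isMildSol_le_parabolicNorm_rpow (E : Type*) [NormedAddCommGroup E]
    [InnerProductSpace ℝ E] [FiniteDimensional ℝ E] [MeasurableSpace E] [BorelSpace E] {p q : ℝ}
    (hp : 0 < p) (hq : 0 < q) (hpq : 1 < p * q) (ha : scalingExponent p q < Module.finrank ℝ E)
    (hb : scalingExponent q p < Module.finrank ℝ E) :
    ∃ δ C : ℝ, 0 < δ ∧ 0 < C ∧ ∀ u₀ v₀ : E → ℝ≥0∞, Measurable u₀ → Measurable v₀ →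
      (∀ x, u₀ x ≤ ENNReal.ofReal δ * ENNReal.ofReal ‖x‖ ^ (-scalingExponent p q)) →
      (∀ x, v₀ x ≤ ENNReal.ofReal δ * ENNReal.ofReal ‖x‖ ^ (-scalingExponent q p)) →
      ∃ U V : E × ℝ → ℝ≥0∞, IsMildSol p q u₀ v₀ U V ∧ ∀ z : E × ℝ, 0 < z.2 →
        U z ≤ ENNReal.ofReal (C * parabolicNorm z.1 z.2 ^ (-scalingExponent p q)) ∧
        V z ≤ ENNReal.ofReal (C * parabolicNorm z.1 z.2 ^ (-scalingExponent q p)) := by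
  have hqp : 1 < q * p := mul_comm p q ▸ hpq
  have hpb := mul_scalingExponent hpq.ne'
  have hqa := mul_scalingExponent hqp.ne'
  obtain ⟨K₁, hK₁, hduhamel₁⟩ := exists_duhamel_le E (scalingExponent_nonneg hp.le hpq) ha
  obtain ⟨K₂, -, hduhamel₂⟩ := exists_duhamel_le E (scalingExponent_nonneg hq.le hqp) hb
  obtain ⟨δ, M₁, M₂, hδ, hM₁, hM₂, hle₁, hle₂⟩ :=
    exists_supersolution_constants hpq (lt_max_of_lt_left hK₁ : 0 < max K₁ K₂)
  refine ⟨δ, max M₁ M₂, hδ, lt_max_of_lt_left hM₁, fun u₀ v₀ hu₀ hv₀ hu hv => ?_⟩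
  obtain ⟨U, V, hUV, hbound⟩ := exists_isMildSol_le_of_supersolution
    (U := fun z => ENNReal.ofReal (M₁ * parabolicNorm z.1 z.2 ^ (-scalingExponent p q)))
    (V := fun z => ENNReal.ofReal (M₂ * parabolicNorm z.1 z.2 ^ (-scalingExponent q p)))
    hp hq hu₀ hv₀
    (fun z hz => by
      have hρ := parabolicNorm_pos z.1 hz
      refine (hduhamel₁ δ (M₂ ^ p) hδ.le (by positivity) u₀ _ hu (fun w hw =>
        (ofReal_mul_rpow_neg_rpow hp.le hM₂.le (parabolicNorm_pos w.1 hw) hpb).le) z hz).trans ?_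
      gcongr
      exact (mul_le_mul_of_nonneg_right (le_max_left K₁ K₂) (by positivity)).trans hle₁)
    (fun z hz => by
      have hρ := parabolicNorm_pos z.1 hz
      refine (hduhamel₂ δ (M₁ ^ q) hδ.le (by positivity) v₀ _ hv (fun w hw =>
        (ofReal_mul_rpow_neg_rpow hq.le hM₁.le (parabolicNorm_pos w.1 hw) hqa).le) z hz).trans ?_
      gcongr
      exact (mul_le_mul_of_nonneg_right (le_max_right K₁ K₂) (by positivity)).trans hle₂)
  refine ⟨U, V, hUV, fun z hz => ?_⟩
  have hρ := parabolicNorm_pos z.1 hz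
  exact ⟨(hbound z hz).1.trans (by gcongr; exact le_max_left M₁ M₂),
    (hbound z hz).2.trans (by gcongr; exact le_max_right M₁ M₂)⟩

section Transfer

variable {N : ℕ}

lemma heatS_eq_heatFlow {t : ℝ} (ht : 0 ≤ t) (φ : Euc N → ℝ) (x : Euc N) :
    heatS N t φ x = heatFlow t (fun y => ENNReal.ofReal (φ y)) x := by
  unfold heatS heatFlow heatKernel
  refine lintegral_congr fun y => ?_
  rw [finrank_euclideanSpace_fin, ENNReal.ofReal_mul (by positivity)]

lemma duhamel_eq_heatS_add {p : ℝ} (hp : 0 ≤ p) (φ : Euc N → ℝ) {W : Euc N × ℝ → ℝ≥0∞}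
    (hW : ∀ z : Euc N × ℝ, 0 < z.2 → W z ≠ ⊤) (x : Euc N) {t : ℝ} (ht : 0 ≤ t) :
    duhamel (fun y => ENNReal.ofReal (φ y)) (fun z => W z ^ p) (x, t) =
      heatS N t φ x +
        ∫⁻ s in Set.Ioo 0 t, heatS N (t - s) (fun y => (W (y, s)).toReal ^ p) x := by
  rw [duhamel, heatS_eq_heatFlow ht]
  congr 1
  refine setLIntegral_congr_fun measurableSet_Ioo fun s hs => ?_
  have hpow (y : Euc N) : ENNReal.ofReal ((W (y, s)).toReal ^ p) = W (y, s) ^ p := by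
    rw [← ENNReal.ofReal_rpow_of_nonneg ENNReal.toReal_nonneg hp,
      ENNReal.ofReal_toReal (hW (y, s) hs.1)]
  simp only [heatS_eq_heatFlow (sub_nonneg.2 hs.2.le), hpow]

lemma locBdd_toReal (T : ℝ≥0∞) {U : Euc N × ℝ → ℝ≥0∞} {C a : ℝ} (hC : 0 ≤ C) (ha : 0 ≤ a)
    (hU : ∀ z : Euc N × ℝ, 0 < z.2 → U z ≤ ENNReal.ofReal (C * parabolicNorm z.1 z.2 ^ (-a))) :
    LocBdd N T fun x t => (U (x, t)).toReal := by
  intro τ hτ _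
  refine ⟨C * √τ ^ (-a), fun t ht _ => ae_of_all _ fun x => ?_⟩
  have hρ : √τ ≤ parabolicNorm x t := (Real.sqrt_le_sqrt ht).trans (sqrt_le_parabolicNorm x t)
  rw [abs_of_nonneg ENNReal.toReal_nonneg]
  refine ENNReal.toReal_le_of_le_ofReal (by positivity) ((hU (x, t) (hτ.trans_le ht)).trans ?_)
  exact ENNReal.ofReal_le_ofReal (mul_le_mul_of_nonneg_left
    (Real.rpow_le_rpow_of_nonpos (Real.sqrt_pos.2 hτ) hρ (neg_nonpos.2 ha)) hC)

theorem IsMildSol.isSolSys {p q C a b : ℝ} {u₀ v₀ : Euc N → ℝ} {U V : Euc N × ℝ → ℝ≥0∞}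
    (hsol : IsMildSol p q (fun x => ENNReal.ofReal (u₀ x)) (fun x => ENNReal.ofReal (v₀ x)) U V)
    (hp : 0 ≤ p) (hq : 0 ≤ q) (hC : 0 ≤ C) (ha : 0 ≤ a) (hb : 0 ≤ b)
    (hU : ∀ z : Euc N × ℝ, 0 < z.2 → U z ≤ ENNReal.ofReal (C * parabolicNorm z.1 z.2 ^ (-a)))
    (hV : ∀ z : Euc N × ℝ, 0 < z.2 → V z ≤ ENNReal.ofReal (C * parabolicNorm z.1 z.2 ^ (-b)))
    (T : ℝ≥0∞) :
    IsSolSys N p q u₀ v₀ T (fun x t => (U (x, t)).toReal) (fun x t => (V (x, t)).toReal) := by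
  have hU_top (z) (hz) : U z ≠ ⊤ := ne_top_of_le_ne_top ENNReal.ofReal_ne_top (hU z hz)
  have hV_top (z) (hz) : V z ≠ ⊤ := ne_top_of_le_ne_top ENNReal.ofReal_ne_top (hV z hz)
  refine ⟨⟨fun _ _ => ENNReal.toReal_nonneg, fun _ _ => ENNReal.toReal_nonneg,
    hsol.measurable_fst.ennreal_toReal, hsol.measurable_snd.ennreal_toReal,
    locBdd_toReal T hC ha hU, locBdd_toReal T hC hb hV⟩, fun t ht _ =>
    ⟨ae_of_all _ fun x => ?_, ae_of_all _ fun x => ?_⟩⟩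
  · rw [ENNReal.ofReal_toReal (hU_top (x, t) ht), ← duhamel_eq_heatS_add hp u₀ hV_top x ht.le,
      ← hsol.eq_fst]
  · rw [ENNReal.ofReal_toReal (hV_top (x, t) ht), ← duhamel_eq_heatS_add hq v₀ hU_top x ht.le,
      ← hsol.eq_snd]

end Transfer

/-- Corollary 3.2 (ii), `Ω = ℝ^N`, `P = Q = 2`: there are `d*, C > 0` such
that data with `0 ≤ u₀ ≤ d|x|^{-N/r₁}`, `0 ≤ v₀ ≤ d|x|^{-N/r₂}` and `0 < d ≤ d*` yield a
global-in-time solution of (S) with `u ≤ C(|x|+√t)^{-N/r₁}` and `v ≤ C(|x|+√t)^{-N/r₂}`. -/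
theorem statement13 (N : ℕ) (hN : 1 ≤ N) (p q : ℝ) (hp : 0 ≤ p) (hq : 0 ≤ q)
    (hpq : 1 < p * q) (r₁ r₂ : ℝ)
    (hr₁def : r₁ = (N : ℝ) / 2 * ((p * q - 1) / (p + 1)))
    (hr₂def : r₂ = (N : ℝ) / 2 * ((p * q - 1) / (q + 1)))
    (hr₁ : 1 < r₁) (hr₂ : 1 < r₂) :
    ∃ dstar C : ℝ, 0 < dstar ∧ 0 < C ∧
      ∀ d : ℝ, 0 < d → d ≤ dstar →
        ∀ u₀ v₀ : Euc N → ℝ, Measurable u₀ → Measurable v₀ →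
          (∀ x, 0 ≤ u₀ x) → (∀ x, 0 ≤ v₀ x) →
          (∀ x : Euc N, ENNReal.ofReal (u₀ x) ≤
              ENNReal.ofReal d * ENNReal.ofReal ‖x‖ ^ (-(N : ℝ) / r₁)) →
          (∀ x : Euc N, ENNReal.ofReal (v₀ x) ≤
              ENNReal.ofReal d * ENNReal.ofReal ‖x‖ ^ (-(N : ℝ) / r₂)) →
          ∃ u v : Euc N → ℝ → ℝ, IsSolSys N p q u₀ v₀ ⊤ u v ∧
            ∀ t : ℝ, 0 < t →
              ∀ᵐ x ∂(volume : Measure (Euc N)),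
                u x t ≤ C * (‖x‖ + Real.sqrt t) ^ (-(N : ℝ) / r₁) ∧
                v x t ≤ C * (‖x‖ + Real.sqrt t) ^ (-(N : ℝ) / r₂) := by
  have hN₀ : (0 : ℝ) < N := by exact_mod_cast hN
  have hp₀ : 0 < p := hp.lt_of_ne' (by rintro rfl; norm_num at hpq)
  have hq₀ : 0 < q := hq.lt_of_ne' (by rintro rfl; norm_num at hpq)
  have hexp₁ : -(N : ℝ) / r₁ = -scalingExponent p q := by
    rw [hr₁def, neg_div_eq_neg_scalingExponent hN₀.ne']
  have hexp₂ : -(N : ℝ) / r₂ = -scalingExponent q p := by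
    rw [hr₂def, mul_comm p q, neg_div_eq_neg_scalingExponent hN₀.ne']
  have ha : scalingExponent p q < N := by linarith [div_lt_self hN₀ hr₁, neg_div r₁ (N : ℝ)]
  have hb : scalingExponent q p < N := by linarith [div_lt_self hN₀ hr₂, neg_div r₂ (N : ℝ)]
  obtain ⟨δ, C, hδ, hC, hsolve⟩ := exists_isMildSol_le_parabolicNorm_rpow (Euc N) hp₀ hq₀ hpq
    (by rwa [finrank_euclideanSpace_fin]) (by rwa [finrank_euclideanSpace_fin])
  rw [hexp₁, hexp₂]
  refine ⟨δ, C, hδ, hC, fun d _ hd u₀ v₀ hu₀ hv₀ _ _ hu hv => ?_⟩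
  obtain ⟨U, V, hsol, hbound⟩ := hsolve _ _ hu₀.ennreal_ofReal hv₀.ennreal_ofReal
    (fun x => (hu x).trans (by gcongr)) (fun x => (hv x).trans (by gcongr))
  refine ⟨_, _, hsol.isSolSys hp hq hC.le (scalingExponent_nonneg hp hpq)
    (scalingExponent_nonneg hq (mul_comm p q ▸ hpq)) (fun z hz => (hbound z hz).1)
    (fun z hz => (hbound z hz).2) ⊤, fun t ht => ae_of_all _ fun x => ?_⟩
  have := parabolicNorm_pos x ht
  exact ⟨ENNReal.toReal_le_of_le_ofReal (by positivity) (hbound (x, t) ht).1,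
    ENNReal.toReal_le_of_le_ofReal (by positivity) (hbound (x, t) ht).2⟩
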